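/- A set E of n-cbc is compatible if and only if the graph G_n(E) contains no non-empty directed path from vertex 0 to itself, i.e., there is no m ≥ 1 and sequence k_0 = 0, k_1, …, k_m = 0 in [n) with an arrow from k_s to k_{s+1} in G_n(E) for every 0 ≤ s < m. -/

import Mathlib

/-!
An `n`-cbc is, up to the injective encoding `(i, j) ↦ a^i b a^j`, a set `S` of `n` pairs of
residues mod `n`, and `∘_r` glues two pairs whenever their inner coordinates sum to `r`. Two words
`p ≠ q` of `S` give the arrow `p.1 - q.1 → q.2 - p.2`. Two distinct factorizations of one word over
`{a^n} ∪ X` are read as a closed path at `0`: matching the exponents between consecutive letters `b`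
says that the differences of the paired words line up.

Let `R` be a transitive relation with `¬ R 0 0` (the reachability relation of the graph, when it
has no closed path at `0`). Call `S` `R`-admissible if all its arrows lie in `R`.
* Admissible sets are closed under composition, and in `S ∘_r T` every word comes from only one
  glued pair (`Adm.comp`, `Adm.glue_injOn`).
* The gluable pairs of all `r` together are exactly `S × T` (`sum_card_glue`). So an admissible set
  of size `s > n` would satisfy `|S ∘_r S| > s` for some `r`, and be admissible again: impossible in
  a finite group. Hence admissible sets have at most `n` elements (`Adm.card_le`), and since the `n`
  compositions of two admissible `n`-sets have total size `n²`, each has size exactly `n`.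
* Admissible sets give codes (`Adm.isCode`).

Conversely, if all compositions have size `n`, the same count shows that gluing is injective.
Following a path in the graph from `0` then produces an iterated composition with two distinct
words realizing that path, and these words coincide if the path returns to `0`.
-/

namespace CBC

variable {A : Type*}

/-- `a^i` -/
def apow (a : A) (i : ℕ) : FreeMonoid A := (FreeMonoid.of a) ^ i

/-- the bayonet word `a^i b a^j` -/
def bay (a b : A) (i j : ℕ) : FreeMonoid A := apow a i * FreeMonoid.of b * apow a j

/-- `X` is a (variable-length) code -/
def IsCode (X : Set (FreeMonoid A)) : Prop :=
  ∀ l m : List (FreeMonoid A), (∀ w ∈ l, w ∈ X) → (∀ w ∈ m, w ∈ X) →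
    l.prod = m.prod → l = m

/-- `X` is a maximal code -/
def IsMaximalCode (X : Set (FreeMonoid A)) : Prop :=
  IsCode X ∧ ∀ Y : Set (FreeMonoid A), IsCode Y → X ⊆ Y → Y = X

/-- a bayonet code : a code included in `a^* b a^*` -/
def IsBayonetCode (a b : A) (Y : Set (FreeMonoid A)) : Prop :=
  (∀ w ∈ Y, ∃ i j : ℕ, w = bay a b i j) ∧ IsCode Y

/-- an `n`-complete bayonet code -/
def IsCbc (a b : A) (n : ℕ) (X : Set (FreeMonoid A)) : Prop :=
  (∀ w ∈ X, ∃ i < n, ∃ j < n, w = bay a b i j) ∧ X.ncard = n ∧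
    IsCode (insert (apow a n) X)

/-- the composition `X ∘_r Y` -/
def comp (a b : A) (n r : ℕ) (X Y : Set (FreeMonoid A)) : Set (FreeMonoid A) :=
  { w | ∃ i j k l : ℕ, bay a b i j ∈ X ∧ bay a b k l ∈ Y ∧ (j + k) % n = r ∧
        w = bay a b i l }

/-- iterated composition `X ∘_{r₁} X₁ ∘_{r₂} ⋯ ∘_{r_k} X_k` -/
def compList (a b : A) (n : ℕ) (X : Set (FreeMonoid A))
    (rest : List (ℕ × Set (FreeMonoid A))) : Set (FreeMonoid A) :=
  rest.foldl (fun acc p => comp a b n p.1 acc p.2) X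

/-- a compatible set of `n`-cbc -/
def Compatible (a b : A) (n : ℕ) (E : Set (Set (FreeMonoid A))) : Prop :=
  ∀ X ∈ E, ∀ rest : List (ℕ × Set (FreeMonoid A)),
    (∀ p ∈ rest, p.1 < n ∧ p.2 ∈ E) → IsCbc a b n (compList a b n X rest)

/-- a stable set of `n`-cbc -/
def StableSet (a b : A) (n : ℕ) (S : Set (Set (FreeMonoid A))) : Prop :=
  (∀ X ∈ S, IsCbc a b n X) ∧ ∀ X ∈ S, ∀ Y ∈ S, ∀ r < n, comp a b n r X Y ∈ S

/-- `E^∘`, the smallest stable set containing `E` -/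
def stableClosure (a b : A) (n : ℕ) (E : Set (Set (FreeMonoid A))) :
    Set (Set (FreeMonoid A)) :=
  ⋂₀ { S | StableSet a b n S ∧ E ⊆ S }

/-- `(P,Q)` is a border of the `n`-cbc `X` : the map
`P × X × Q → (ZMod n)²`, `(p, a^i b a^j, q) ↦ (p + i, j + q)` is a bijection. -/
def IsBorder (a b : A) (n : ℕ) (P Q : Set ℤ) (X : Set (FreeMonoid A)) : Prop :=
  ∀ c : ZMod n × ZMod n, ∃! t : ℤ × (ℕ × ℕ) × ℤ,
    t.1 ∈ P ∧ bay a b t.2.1.1 t.2.1.2 ∈ X ∧ t.2.2 ∈ Q ∧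
    (t.1 : ZMod n) + (t.2.1.1 : ZMod n) = c.1 ∧
    (t.2.1.2 : ZMod n) + (t.2.2 : ZMod n) = c.2

/-- `(P,Q)` is a border of every element of `E` -/
def BordersFamily (a b : A) (n : ℕ) (P Q : Set ℤ)
    (E : Set (Set (FreeMonoid A))) : Prop :=
  ∀ X ∈ E, IsBorder a b n P Q X

def toZ (S : Set ℕ) : Set ℤ := (fun i : ℕ => (i : ℤ)) '' S

def toZModN (n : ℕ) (S : Set ℕ) : Set (ZMod n) := (fun i : ℕ => (i : ZMod n)) '' S

def toZModZ (n : ℕ) (S : Set ℤ) : Set (ZMod n) := (fun i : ℤ => (i : ZMod n)) '' S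

/-- `(P,Q)` is a factorization of size `n` -/
def IsFactorization (n : ℕ) (P Q : Set (ZMod n)) : Prop :=
  ∀ c : ZMod n, ∃! pq : ZMod n × ZMod n, pq.1 ∈ P ∧ pq.2 ∈ Q ∧ pq.1 + pq.2 = c

/-- `L_k^n(Y)` -/
def Lset (a b : A) (n : ℕ) (Y : Set (FreeMonoid A)) (k : ℕ) : Set ℕ :=
  { i | ∃ i' j' : ℕ, bay a b i' j' ∈ Y ∧ i' % n = i ∧ j' % n = k }

/-- `R_k^n(Y)` -/
def Rset (a b : A) (n : ℕ) (Y : Set (FreeMonoid A)) (k : ℕ) : Set ℕ :=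
  { j | ∃ i' j' : ℕ, bay a b i' j' ∈ Y ∧ i' % n = k ∧ j' % n = j }

/-- `L(Y)` -/
def Lfull (a b : A) (n : ℕ) (Y : Set (FreeMonoid A)) : Set ℕ :=
  { i | ∃ i' j' : ℕ, bay a b i' j' ∈ Y ∧ i' % n = i }

/-- `R(Y)` -/
def Rfam (a b : A) (n : ℕ) (Y : Set (FreeMonoid A)) : Set (Set ℕ) :=
  { R | ∃ k ∈ Lfull a b n Y, R = Rset a b n Y k }

/-- the `n`-cbc `X` borders the set `E` -/
def CbcBorders (a b : A) (n : ℕ) (X : Set (FreeMonoid A))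
    (E : Set (Set (FreeMonoid A))) : Prop :=
  ∀ R ∈ Rfam a b n X,
    IsFactorization n (toZModN n R) (toZModN n (Lfull a b n X)) ∧
    BordersFamily a b n (toZ R) (toZ (Lfull a b n X)) E

/-- `R_k^n(a^P X)` -/
def RsetShift (a b : A) (n : ℕ) (P : Set ℤ) (X : Set (FreeMonoid A)) (k : ℕ) :
    Set ℕ :=
  { j | j < n ∧ ∃ (p : ℤ) (i' j' : ℕ), p ∈ P ∧ bay a b i' j' ∈ X ∧
        ((p + (i' : ℤ) : ℤ) : ZMod n) = (k : ZMod n) ∧ j' % n = j }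

/-- `L_k^n(Y a^Q)` -/
def LsetShift (a b : A) (n : ℕ) (Y : Set (FreeMonoid A)) (Q : Set ℤ) (k : ℕ) :
    Set ℕ :=
  { i | i < n ∧ ∃ (i' j' : ℕ) (q : ℤ), q ∈ Q ∧ bay a b i' j' ∈ Y ∧
        i' % n = i ∧ (((j' : ℤ) + q : ℤ) : ZMod n) = (k : ZMod n) }

/-- `H_t(X)`, for `X ⊆ { a^i b a^j : i, j ∈ [n) }` -/
def Hfam (a b : A) (n t : ℕ) (X : Set (FreeMonoid A)) : Set (Set (FreeMonoid A)) :=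
  { Y | ∃ f : ℕ → ℕ → ℕ → ℕ, (∀ i j s, f i j s < t) ∧
      Y = { w | ∃ i j s : ℕ, bay a b i j ∈ X ∧ s < t ∧
                w = bay a b (i + f i j s * n) (j + s * n) } }

/-- `E' ∈ ℋ_t(E)` -/
def HfamSet (a b : A) (n t : ℕ) (E E' : Set (Set (FreeMonoid A))) : Prop :=
  (∀ Y ∈ E', ∃ X ∈ E, Y ∈ Hfam a b n t X) ∧
  (∀ X ∈ E, ∃ Y ∈ E', Y ∈ Hfam a b n t X)

/-- the dual `X̃` of a bayonet code -/
def dual (a b : A) (X : Set (FreeMonoid A)) : Set (FreeMonoid A) :=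
  { w | ∃ i j : ℕ, bay a b i j ∈ X ∧ w = bay a b j i }

/-- a set `E` of `n`-cbc is of Hajós -/
def IsHajos (a b : A) (n : ℕ) (E : Set (Set (FreeMonoid A))) : Prop :=
  ∃ (k : ℕ) (ts : ℕ → ℕ) (Ys : ℕ → Set (FreeMonoid A)),
    (∀ i, 1 ≤ i → i ≤ k → 1 < ts i) ∧
    (∏ i ∈ Finset.Icc 1 k, ts i) = n ∧
    Ys 0 = {FreeMonoid.of b} ∧
    (∀ i, i ≤ k - 1 → IsBayonetCode a b (Ys i)) ∧
    (∀ i, 1 ≤ i → i ≤ k - 1 →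
      dual a b (Ys i) ∈ Hfam a b (∏ j ∈ Finset.Icc 1 (i - 1), ts j) (ts i) (Ys (i - 1))) ∧
    (if k = 0 then ∀ Y ∈ E, Y = ({FreeMonoid.of b} : Set (FreeMonoid A))
     else
       (∀ Y ∈ E, Y ∈ Hfam a b (∏ j ∈ Finset.Icc 1 (k - 1), ts j) (ts k) (Ys (k - 1))) ∨
       (∀ Y ∈ E, dual a b Y ∈ Hfam a b (∏ j ∈ Finset.Icc 1 (k - 1), ts j) (ts k) (Ys (k - 1))))

/-- a Krasner factorization of size `n` -/
def IsKrasner (n : ℕ) (P Q : Set ℕ) : Prop :=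
  P.Finite ∧ Q.Finite ∧ P.ncard * Q.ncard = n ∧ ∀ k < n, ∃ p ∈ P, ∃ q ∈ Q, k = p + q

/-- `C_M(ω) = { a^{i mod n} b a^{j mod n} : a^i ω a^j ∈ M^* }` -/
def Cword (a b : A) (n : ℕ) (M : Set (FreeMonoid A)) (ω : FreeMonoid A) :
    Set (FreeMonoid A) :=
  { w | ∃ i j : ℕ, apow a i * ω * apow a j ∈ Submonoid.closure M ∧
        w = bay a b (i % n) (j % n) }

/-- the arrow relation of the graph `G_n(E)` on the vertex set `[n)` -/
def Arrow (a b : A) (n : ℕ) (E : Set (Set (FreeMonoid A))) (k₁ k₂ : ℕ) : Prop :=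
  k₁ < n ∧ k₂ < n ∧ ∃ X ∈ E, ∃ i₁ j₁ i₂ j₂ : ℕ,
    bay a b i₁ j₁ ∈ X ∧ bay a b i₂ j₂ ∈ X ∧ bay a b i₁ j₁ ≠ bay a b i₂ j₂ ∧
    (k₁ : ZMod n) = (i₁ : ZMod n) - (i₂ : ZMod n) ∧
    (k₂ : ZMod n) = (j₂ : ZMod n) - (j₁ : ZMod n)

/-! ### Admissible sets of pairs in a finite group -/

section Abstract

variable {G : Type*} [AddCommGroup G] [Fintype G] [DecidableEq G]

/-- The pairs of elements of `S × T` that can be glued in `S ∘_r T`. -/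
def glue (r : G) (S T : Finset (G × G)) : Finset ((G × G) × (G × G)) :=
  (S ×ˢ T).filter (fun x => x.1.2 + x.2.1 = r)

/-- The outer coordinates of a glued pair. -/
def outer (x : (G × G) × (G × G)) : G × G := (x.1.1, x.2.2)

/-- The composition `S ∘_r T` on sets of pairs of residues. -/
def pcomp (r : G) (S T : Finset (G × G)) : Finset (G × G) := (glue r S T).image outer

/-- All the arrows of `S` lie in the relation `R`. -/
def Adm (R : G → G → Prop) (S : Finset (G × G)) : Prop :=
  ∀ p ∈ S, ∀ q ∈ S, p ≠ q → R (p.1 - q.1) (q.2 - p.2)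

omit [Fintype G] in
lemma mem_glue {r : G} {S T : Finset (G × G)} {x : (G × G) × (G × G)} :
    x ∈ glue r S T ↔ x.1 ∈ S ∧ x.2 ∈ T ∧ x.1.2 + x.2.1 = r := by
  simp [glue, and_assoc]

lemma sum_card_glue (S T : Finset (G × G)) :
    ∑ r : G, (glue r S T).card = S.card * T.card := by
  rw [← Finset.card_product]
  exact (Finset.card_eq_sum_card_fiberwise (f := fun x : (G × G) × (G × G) => x.1.2 + x.2.1)
    (t := Finset.univ) (fun _ _ => Finset.mem_coe.2 (Finset.mem_univ _))).symm

omit [Fintype G] in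
/-- Distinct pairs glued along the same `r` give an `R`-step between the differences of their
outer coordinates: one arrow if they share a component, two composable arrows otherwise. -/
lemma Adm.step {R : G → G → Prop} (hR : ∀ u v w, R u v → R v w → R u w)
    {S T : Finset (G × G)} (hS : Adm R S) (hT : Adm R T) {r : G}
    {x y : (G × G) × (G × G)} (hx : x ∈ glue r S T) (hy : y ∈ glue r S T) (hxy : x ≠ y) :
    R (x.1.1 - y.1.1) (y.2.2 - x.2.2) := by
  obtain ⟨hx1, hx2, hxr⟩ := mem_glue.1 hx
  obtain ⟨hy1, hy2, hyr⟩ := mem_glue.1 hy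
  have hmid : y.1.2 - x.1.2 = x.2.1 - y.2.1 := by
    rw [sub_eq_sub_iff_add_eq_add, hyr, ← hxr, add_comm]
  by_cases h1 : x.1 = y.1
  · have h2 : x.2 ≠ y.2 := fun h => hxy (Prod.ext h1 h)
    have := hT _ hx2 _ hy2 h2
    rw [← hmid] at this
    simpa [h1] using this
  · have hs := hS _ hx1 _ hy1 h1
    by_cases h2 : x.2 = y.2
    · rw [hmid] at hs
      simpa [h2] using hs
    · rw [hmid] at hs
      exact hR _ _ _ hs (hT _ hx2 _ hy2 h2)

omit [Fintype G] in
lemma Adm.comp {R : G → G → Prop} (hR : ∀ u v w, R u v → R v w → R u w)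
    {S T : Finset (G × G)} (hS : Adm R S) (hT : Adm R T) (r : G) : Adm R (pcomp r S T) := by
  intro p hp q hq hpq
  obtain ⟨x, hx, rfl⟩ := Finset.mem_image.1 hp
  obtain ⟨y, hy, rfl⟩ := Finset.mem_image.1 hq
  exact Adm.step hR hS hT hx hy (fun h => hpq (by rw [h]))

omit [Fintype G] in
lemma Adm.glue_injOn {R : G → G → Prop} (hR : ∀ u v w, R u v → R v w → R u w) (h0 : ¬ R 0 0)
    {S T : Finset (G × G)} (hS : Adm R S) (hT : Adm R T) (r : G) :
    Set.InjOn outer (glue r S T : Set ((G × G) × (G × G))) := by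
  intro x hx y hy hxy
  by_contra hne
  have := Adm.step hR hS hT hx hy hne
  simp only [outer, Prod.mk.injEq] at hxy
  rw [hxy.1, hxy.2, sub_self, sub_self] at this
  exact h0 this

/-- An admissible set has at most `|G|` elements: otherwise one of its compositions with itself
would be a larger admissible set, so no largest admissible set could exist. -/
lemma Adm.card_le {R : G → G → Prop} (hR : ∀ u v w, R u v → R v w → R u w) (h0 : ¬ R 0 0)
    {S : Finset (G × G)} (hS : Adm R S) : S.card ≤ Fintype.card G := by
  classical
  obtain ⟨M, hM, hmax⟩ := Finset.exists_max_image
    ((Finset.univ : Finset (Finset (G × G))).filter (Adm R)) Finset.card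
    ⟨S, by simpa using hS⟩
  have hMa : Adm R M := by simpa using hM
  refine (hmax S (by simpa using hS)).trans ?_
  by_contra! hlt
  have hle : ∀ r : G, (glue r M M).card ≤ M.card := fun r => by
    rw [← Finset.card_image_of_injOn (Adm.glue_injOn hR h0 hMa hMa r)]
    exact hmax (pcomp r M M) (by simpa using Adm.comp hR hMa hMa r)
  have hsum := sum_card_glue M M
  have := Finset.sum_le_sum (fun r (_ : r ∈ (Finset.univ : Finset G)) => hle r)
  rw [hsum, Finset.sum_const, Finset.card_univ, smul_eq_mul] at this
  nlinarith

lemma Adm.card_comp {R : G → G → Prop} (hR : ∀ u v w, R u v → R v w → R u w) (h0 : ¬ R 0 0)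
    {S T : Finset (G × G)} (hS : Adm R S) (hT : Adm R T)
    (hSc : S.card = Fintype.card G) (hTc : T.card = Fintype.card G) (r : G) :
    (pcomp r S T).card = Fintype.card G := by
  have heq : ∀ r : G, (pcomp r S T).card = (glue r S T).card := fun r =>
    Finset.card_image_of_injOn (Adm.glue_injOn hR h0 hS hT r)
  have hle : ∀ r ∈ (Finset.univ : Finset G), (glue r S T).card ≤ Fintype.card G := fun r _ => by
    rw [← heq]
    exact Adm.card_le hR h0 (Adm.comp hR hS hT r)
  have hsum : ∑ r : G, (glue r S T).card = ∑ _r : G, Fintype.card G := by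
    rw [sum_card_glue, hSc, hTc, Finset.sum_const, Finset.card_univ, smul_eq_mul]
  rw [heq]
  exact (Finset.sum_eq_sum_iff_of_le hle).1 hsum r (Finset.mem_univ r)

/-- If every composition of `S` and `T` has the expected size, no word of a composition arises
from two glued pairs. -/
lemma glue_injOn_of_card {S T : Finset (G × G)}
    (hSc : S.card = Fintype.card G) (hTc : T.card = Fintype.card G)
    (h : ∀ r : G, (pcomp r S T).card = Fintype.card G) (r : G) :
    Set.InjOn outer (glue r S T : Set ((G × G) × (G × G))) := by
  have hle : ∀ r ∈ (Finset.univ : Finset G), Fintype.card G ≤ (glue r S T).card := fun r _ => by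
    rw [← h r]
    exact Finset.card_image_le
  have hsum : ∑ _r : G, Fintype.card G = ∑ r : G, (glue r S T).card := by
    rw [sum_card_glue, hSc, hTc, Finset.sum_const, Finset.card_univ, smul_eq_mul]
  have := (Finset.sum_eq_sum_iff_of_le hle).1 hsum r (Finset.mem_univ r)
  exact Finset.card_image_iff.1 ((h r).trans this)

end Abstract

/-! ### Bayonet words and codes -/

section Words

lemma apow_add (a : A) (i j : ℕ) : apow a (i + j) = apow a i * apow a j := pow_add _ _ _

lemma apow_succ (a : A) (i : ℕ) : apow a (i + 1) = FreeMonoid.of a * apow a i := pow_succ' _ _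

lemma of_mul_inj {x y : A} {w w' : FreeMonoid A}
    (h : FreeMonoid.of x * w = FreeMonoid.of y * w') : x = y ∧ w = w' :=
  List.cons.inj (h : (x :: FreeMonoid.toList w) = y :: FreeMonoid.toList w')

lemma of_mul_ne_one {x : A} {w : FreeMonoid A} : FreeMonoid.of x * w ≠ 1 := fun h =>
  List.cons_ne_nil x (FreeMonoid.toList w) h

lemma apow_b_inj {a b : A} (hab : a ≠ b) {w w' : FreeMonoid A} :
    ∀ {u v : ℕ}, apow a u * (FreeMonoid.of b * w) = apow a v * (FreeMonoid.of b * w') →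
      u = v ∧ w = w'
  | 0, 0, h => by simpa [apow] using h
  | 0, v + 1, h => by
      rw [apow_succ, mul_assoc] at h
      simp only [apow, pow_zero, one_mul] at h
      exact absurd (of_mul_inj h).1.symm hab
  | u + 1, 0, h => by
      rw [apow_succ, mul_assoc] at h
      simp only [apow, pow_zero, one_mul] at h
      exact absurd (of_mul_inj h).1 hab
  | u + 1, v + 1, h => by
      rw [apow_succ, apow_succ, mul_assoc, mul_assoc] at h
      have := apow_b_inj hab (of_mul_inj h).2
      exact ⟨by rw [this.1], this.2⟩

lemma apow_ne_apow_b {a b : A} (hab : a ≠ b) {w : FreeMonoid A} :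
    ∀ {u v : ℕ}, apow a u ≠ apow a v * (FreeMonoid.of b * w)
  | 0, 0, h => by
      simp only [apow, pow_zero, one_mul] at h
      exact of_mul_ne_one h.symm
  | 0, v + 1, h => by
      rw [apow_succ, mul_assoc] at h
      exact of_mul_ne_one h.symm
  | u + 1, 0, h => by
      rw [apow_succ] at h
      simp only [apow, pow_zero, one_mul] at h
      exact hab (of_mul_inj h).1
  | u + 1, v + 1, h => by
      rw [apow_succ, apow_succ, mul_assoc] at h
      exact apow_ne_apow_b hab (of_mul_inj h).2

lemma apow_inj {a : A} {u v : ℕ} (h : apow a u = apow a v) : u = v := by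
  induction u generalizing v with
  | zero =>
    cases v with
    | zero => rfl
    | succ v => rw [apow_succ] at h; exact absurd h.symm of_mul_ne_one
  | succ u ih =>
    cases v with
    | zero => rw [apow_succ] at h; exact absurd h of_mul_ne_one
    | succ v =>
      rw [apow_succ, apow_succ] at h
      rw [ih (of_mul_inj h).2]

lemma bay_inj {a b : A} (hab : a ≠ b) {i j k l : ℕ} (h : bay a b i j = bay a b k l) :
    i = k ∧ j = l := by
  simp only [bay, mul_assoc] at h
  have := apow_b_inj hab h
  exact ⟨this.1, apow_inj this.2⟩

variable {n : ℕ} [NeZero n]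

/-- The word `a^i b a^j` of a pair of residues, with exponents in `[n)`. -/
def word (a b : A) (p : ZMod n × ZMod n) : FreeMonoid A := bay a b p.1.val p.2.val

/-- The set of words encoded by a set of pairs of residues. -/
def words (a b : A) (S : Finset (ZMod n × ZMod n)) : Set (FreeMonoid A) :=
  word a b '' (S : Set (ZMod n × ZMod n))

lemma word_injective {a b : A} (hab : a ≠ b) :
    Function.Injective (word a b : ZMod n × ZMod n → FreeMonoid A) := fun _ _ h =>
  Prod.ext (ZMod.val_injective n (bay_inj hab h).1) (ZMod.val_injective n (bay_inj hab h).2)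

lemma ncard_words {a b : A} (hab : a ≠ b) (S : Finset (ZMod n × ZMod n)) :
    (words a b S).ncard = S.card := by
  rw [words, Set.ncard_image_of_injective _ (word_injective hab), Set.ncard_coe_finset]

omit [NeZero n] in
lemma bay_mem_words {a b : A} (hab : a ≠ b) {S : Finset (ZMod n × ZMod n)} {i j : ℕ} :
    bay a b i j ∈ words a b S ↔ ∃ p ∈ S, p.1.val = i ∧ p.2.val = j := by
  constructor
  · rintro ⟨p, hp, h⟩
    exact ⟨p, hp, bay_inj hab h⟩
  · rintro ⟨p, hp, rfl, rfl⟩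
    exact ⟨p, hp, rfl⟩

lemma IsCbc.exists_words {a b : A} (hab : a ≠ b) {X : Set (FreeMonoid A)} (hX : IsCbc a b n X) :
    ∃ S : Finset (ZMod n × ZMod n), X = words a b S ∧ S.card = n := by
  classical
  have hXS : X = words a b (Finset.univ.filter
      (fun p : ZMod n × ZMod n => word a b p ∈ X)) := by
    ext w
    constructor
    · intro hw
      obtain ⟨i, hi, j, hj, rfl⟩ := hX.1 w hw
      refine (bay_mem_words hab).2 ⟨((i : ZMod n), (j : ZMod n)), ?_, ?_, ?_⟩
      · rw [Finset.mem_filter]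
        refine ⟨Finset.mem_univ _, ?_⟩
        rwa [word, ZMod.val_cast_of_lt hi, ZMod.val_cast_of_lt hj]
      · exact ZMod.val_cast_of_lt hi
      · exact ZMod.val_cast_of_lt hj
    · rintro ⟨p, hp, rfl⟩
      simpa using hp
  refine ⟨_, hXS, ?_⟩
  rw [← ncard_words hab, ← hXS]
  exact hX.2.1

lemma comp_words {a b : A} (hab : a ≠ b) {r : ℕ} (hr : r < n) (S T : Finset (ZMod n × ZMod n)) :
    comp a b n r (words a b S) (words a b T) = words a b (pcomp (r : ZMod n) S T) := by
  have key : ∀ j k : ZMod n, (j.val + k.val) % n = r ↔ j + k = (r : ZMod n) := fun j k => by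
    rw [← ZMod.val_add, ← (ZMod.val_injective n).eq_iff, ZMod.val_cast_of_lt hr]
  ext w
  constructor
  · rintro ⟨i, j, k, l, h1, h2, h3, rfl⟩
    obtain ⟨p, hp, rfl, rfl⟩ := (bay_mem_words hab).1 h1
    obtain ⟨q, hq, rfl, rfl⟩ := (bay_mem_words hab).1 h2
    exact ⟨(p.1, q.2), Finset.mem_coe.2 (Finset.mem_image.2
      ⟨(p, q), mem_glue.2 ⟨hp, hq, (key _ _).1 h3⟩, rfl⟩), rfl⟩
  · rintro ⟨p, hp, rfl⟩
    obtain ⟨x, hx, rfl⟩ := Finset.mem_image.1 (Finset.mem_coe.1 hp)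
    obtain ⟨h1, h2, h3⟩ := mem_glue.1 hx
    exact ⟨_, _, _, _, (bay_mem_words hab).2 ⟨x.1, h1, rfl, rfl⟩,
      (bay_mem_words hab).2 ⟨x.2, h2, rfl, rfl⟩, (key _ _).2 h3, rfl⟩

/-- Two factorizations of a word that start with pending powers `a^u` and `a^v`: the
difference of the pending exponents is `0` or is `R`-related to `0`. -/
lemma Adm.reach {a b : A} (hab : a ≠ b) {R : ZMod n → ZMod n → Prop}
    (hR : ∀ u v w, R u v → R v w → R u w) {S : Finset (ZMod n × ZMod n)} (hS : Adm R S) :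
    ∀ (l m : List (FreeMonoid A)) (u v : ℕ),
      (∀ w ∈ l, w ∈ insert (apow a n) (words a b S)) →
      (∀ w ∈ m, w ∈ insert (apow a n) (words a b S)) →
      apow a u * l.prod = apow a v * m.prod →
      (v : ZMod n) - u = 0 ∨ R ((v : ZMod n) - u) 0
  | [], [], u, v, _, _, h => by
      simp only [List.prod_nil, mul_one] at h
      left; rw [apow_inj h, sub_self]
  | x :: l, [], u, v, hl, hm, h => by
      have hx := hl x List.mem_cons_self
      have hl' : ∀ w ∈ l, w ∈ insert (apow a n) (words a b S) :=
        fun w hw => hl w (List.mem_cons_of_mem _ hw)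
      rcases hx with rfl | ⟨p, hp, rfl⟩
      · rw [List.prod_cons, ← mul_assoc, ← apow_add] at h
        simpa using Adm.reach hab hR hS l [] (u + n) v hl' hm h
      · simp only [List.prod_cons, List.prod_nil, mul_one, word, bay, mul_assoc] at h
        rw [← mul_assoc, ← apow_add] at h
        exact absurd h.symm (apow_ne_apow_b hab)
  | x :: l, y :: m, u, v, hl, hm, h => by
      have hx := hl x List.mem_cons_self
      have hl' : ∀ w ∈ l, w ∈ insert (apow a n) (words a b S) :=
        fun w hw => hl w (List.mem_cons_of_mem _ hw)
      have hy := hm y List.mem_cons_self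
      have hm' : ∀ w ∈ m, w ∈ insert (apow a n) (words a b S) :=
        fun w hw => hm w (List.mem_cons_of_mem _ hw)
      rcases hx with rfl | ⟨p, hp, rfl⟩
      · rw [List.prod_cons, ← mul_assoc, ← apow_add] at h
        simpa using Adm.reach hab hR hS l (y :: m) (u + n) v hl' hm h
      · rcases hy with rfl | ⟨q, hq, rfl⟩
        · rw [List.prod_cons (l := m), ← mul_assoc (apow a v), ← apow_add] at h
          simpa using Adm.reach hab hR hS (word a b p :: l) m u (v + n) hl hm' h
        · simp only [List.prod_cons, word, bay, mul_assoc] at h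
          rw [← mul_assoc, ← apow_add, ← mul_assoc (apow a v), ← apow_add] at h
          obtain ⟨h1, h2⟩ := apow_b_inj hab h
          have hd : (v : ZMod n) - u = p.1 - q.1 := by
            have := congrArg (Nat.cast : ℕ → ZMod n) h1
            push_cast [ZMod.natCast_zmod_val] at this
            linear_combination -this
          have ih := Adm.reach hab hR hS l m _ _ hl' hm' h2
          rw [ZMod.natCast_zmod_val, ZMod.natCast_zmod_val] at ih
          rw [hd]
          by_cases hpq : p = q
          · left; rw [hpq, sub_self]
          · right
            have hs := hS p hp q hq hpq
            rcases ih with ih | ih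
            · rwa [ih] at hs
            · exact hR _ _ _ hs ih
  | [], y :: m, u, v, hl, hm, h => by
      have hy := hm y List.mem_cons_self
      have hm' : ∀ w ∈ m, w ∈ insert (apow a n) (words a b S) :=
        fun w hw => hm w (List.mem_cons_of_mem _ hw)
      rcases hy with rfl | ⟨q, hq, rfl⟩
      · rw [List.prod_cons, ← mul_assoc (apow a v), ← apow_add] at h
        simpa using Adm.reach hab hR hS [] m u (v + n) hl hm' h
      · simp only [List.prod_cons, List.prod_nil, mul_one, word, bay, mul_assoc] at h
        rw [← mul_assoc (apow a v), ← apow_add] at h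
        exact absurd h (apow_ne_apow_b hab)
  termination_by l m => l.length + m.length

lemma apow_n_mul_ne {a b : A} (hab : a ≠ b) (p : ZMod n × ZMod n) (w w' : FreeMonoid A) :
    apow a n * w ≠ word a b p * w' := by
  intro h
  obtain ⟨c, hc⟩ := Nat.exists_eq_add_of_lt (ZMod.val_lt p.1)
  have hn : apow a n = apow a p.1.val * (FreeMonoid.of a * apow a c) := by
    rw [← apow_succ, ← apow_add, ← add_assoc, ← hc]
  rw [hn] at h
  simp only [word, bay, mul_assoc] at h
  exact hab (of_mul_inj (mul_left_cancel h)).1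

lemma ne_one_of_mem {a b : A} {S : Finset (ZMod n × ZMod n)} {w : FreeMonoid A}
    (hw : w ∈ insert (apow a n) (words a b S)) (w' : FreeMonoid A) : w * w' ≠ 1 := by
  have hnz := NeZero.pos n
  intro h
  have hl := congrArg FreeMonoid.length h
  rcases hw with rfl | ⟨p, _, rfl⟩
  · obtain ⟨c, rfl⟩ := Nat.exists_eq_add_of_lt hnz
    rw [zero_add, apow_succ, mul_assoc] at h
    exact of_mul_ne_one h
  · simp only [word, bay, FreeMonoid.length_mul, FreeMonoid.length_of, FreeMonoid.length_one] at hl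
    omega

lemma Adm.isCode {a b : A} (hab : a ≠ b) {R : ZMod n → ZMod n → Prop}
    (hR : ∀ u v w, R u v → R v w → R u w) (h0 : ¬ R 0 0)
    {S : Finset (ZMod n × ZMod n)} (hS : Adm R S) :
    IsCode (insert (apow a n) (words a b S)) := by
  intro l
  induction l with
  | nil =>
    intro m _ hm h
    cases m with
    | nil => rfl
    | cons y m =>
      rw [List.prod_nil, List.prod_cons] at h
      exact absurd h.symm (ne_one_of_mem (hm y List.mem_cons_self) _)
  | cons x l ih =>
    intro m hl hm h
    have hl' : ∀ w ∈ l, w ∈ insert (apow a n) (words a b S) :=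
      fun w hw => hl w (List.mem_cons_of_mem _ hw)
    cases m with
    | nil =>
      rw [List.prod_nil, List.prod_cons] at h
      exact absurd h (ne_one_of_mem (hl x List.mem_cons_self) _)
    | cons y m =>
      have hm' : ∀ w ∈ m, w ∈ insert (apow a n) (words a b S) :=
        fun w hw => hm w (List.mem_cons_of_mem _ hw)
      rw [List.prod_cons, List.prod_cons] at h
      by_cases hxy : x = y
      · subst hxy
        rw [ih m hl' hm' (mul_left_cancel h)]
      · exfalso
        rcases hl x List.mem_cons_self with rfl | ⟨p, hp, rfl⟩ <;>
          rcases hm y List.mem_cons_self with rfl | ⟨q, hq, rfl⟩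
        · exact hxy rfl
        · exact apow_n_mul_ne hab _ _ _ h
        · exact apow_n_mul_ne hab _ _ _ h.symm
        · have hpq : p ≠ q := fun e => hxy (by rw [e])
          simp only [word, bay, mul_assoc] at h
          obtain ⟨h1, h2⟩ := apow_b_inj hab h
          have hs := hS p hp q hq hpq
          rw [ZMod.val_injective n h1, sub_self] at hs
          have := Adm.reach hab hR hS l m _ _ hl' hm' h2
          rw [ZMod.natCast_zmod_val, ZMod.natCast_zmod_val] at this
          rcases this with e | e
          · rw [e] at hs; exact h0 hs
          · exact h0 (hR _ _ _ hs e)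

/-! ### The graph `G_n(E)` -/

/-- The arrow relation of `G_n(E)`, on residues. -/
def ZArrow (a b : A) (E : Set (Set (FreeMonoid A))) (u v : ZMod n) : Prop :=
  ∃ S : Finset (ZMod n × ZMod n), words a b S ∈ E ∧ ∃ p ∈ S, ∃ q ∈ S, p ≠ q ∧
    u = p.1 - q.1 ∧ v = q.2 - p.2

lemma zArrow_of_arrow {a b : A} (hab : a ≠ b) {E : Set (Set (FreeMonoid A))}
    (hE : ∀ X ∈ E, IsCbc a b n X) {k₁ k₂ : ℕ} (h : Arrow a b n E k₁ k₂) :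
    ZArrow a b E (k₁ : ZMod n) (k₂ : ZMod n) := by
  obtain ⟨_, _, X, hX, i₁, j₁, i₂, j₂, h1, h2, hne, e1, e2⟩ := h
  obtain ⟨S, rfl, _⟩ := (hE X hX).exists_words hab
  obtain ⟨p, hp, rfl, rfl⟩ := (bay_mem_words hab).1 h1
  obtain ⟨q, hq, rfl, rfl⟩ := (bay_mem_words hab).1 h2
  refine ⟨S, hX, p, hp, q, hq, fun e => hne (by rw [e]), ?_, ?_⟩
  · simpa using e1
  · simpa using e2

lemma arrow_of_zArrow {a b : A} (hab : a ≠ b) {E : Set (Set (FreeMonoid A))}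
    {u v : ZMod n} (h : ZArrow a b E u v) : Arrow a b n E u.val v.val := by
  obtain ⟨S, hS, p, hp, q, hq, hne, rfl, rfl⟩ := h
  refine ⟨ZMod.val_lt _, ZMod.val_lt _, _, hS, _, _, _, _, ⟨p, hp, rfl⟩, ⟨q, hq, rfl⟩,
    fun e => hne (word_injective hab e), ?_, ?_⟩ <;> simp

lemma path_iff_transGen {a b : A} (hab : a ≠ b) {E : Set (Set (FreeMonoid A))}
    (hE : ∀ X ∈ E, IsCbc a b n X) :
    (∃ (m : ℕ) (k : ℕ → ℕ), 1 ≤ m ∧ k 0 = 0 ∧ k m = 0 ∧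
      ∀ s < m, Arrow a b n E (k s) (k (s + 1))) ↔
      Relation.TransGen (ZArrow a b E) (0 : ZMod n) 0 := by
  constructor
  · rintro ⟨m, k, hm, hk0, hkm, hk⟩
    have : ∀ t, 1 ≤ t → t ≤ m →
        Relation.TransGen (ZArrow a b E) (k 0 : ZMod n) (k t : ZMod n) := by
      intro t ht
      induction t, ht using Nat.le_induction with
      | base => exact fun h => .single (zArrow_of_arrow hab hE (hk 0 h))
      | succ t _ ih => exact fun h => (ih (by omega)).tail (zArrow_of_arrow hab hE (hk t h))
    simpa [hk0, hkm] using this m hm le_rfl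
  · intro h
    have : ∀ v : ZMod n, Relation.TransGen (ZArrow a b E) (0 : ZMod n) v →
        ∃ (m : ℕ) (k : ℕ → ℕ), 1 ≤ m ∧ k 0 = 0 ∧ k m = v.val ∧
          ∀ s < m, Arrow a b n E (k s) (k (s + 1)) := by
      intro v hv
      induction hv with
      | @single v hv =>
        refine ⟨1, fun s => if s = 0 then 0 else v.val, le_rfl, rfl, rfl, fun s hs => ?_⟩
        obtain rfl : s = 0 := by omega
        simpa using arrow_of_zArrow hab hv
      | @tail v w _ hw ih =>
        obtain ⟨m, k, hm, hk0, hkm, hk⟩ := ih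
        refine ⟨m + 1, fun s => if s ≤ m then k s else w.val, by omega, by simpa using hk0,
          by simp, fun s hs => ?_⟩
        rcases Nat.lt_succ_iff_lt_or_eq.1 hs with hs | rfl
        · simpa [hs.le, Nat.succ_le_of_lt hs] using hk s hs
        · simpa [hkm] using arrow_of_zArrow hab hw
    simpa using this 0 h

omit [NeZero n] in
lemma compList_concat (a b : A) (X Y : Set (FreeMonoid A)) (r : ℕ)
    (rest : List (ℕ × Set (FreeMonoid A))) :
    compList a b n X (rest ++ [(r, Y)]) = comp a b n r (compList a b n X rest) Y := by
  simp [compList]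

lemma compatible_of_acyclic {a b : A} (hab : a ≠ b) {E : Set (Set (FreeMonoid A))}
    (hE : ∀ X ∈ E, IsCbc a b n X)
    (h0 : ¬ Relation.TransGen (ZArrow a b E) (0 : ZMod n) 0) : Compatible a b n E := by
  have hR : ∀ u v w : ZMod n, Relation.TransGen (ZArrow a b E) u v →
      Relation.TransGen (ZArrow a b E) v w → Relation.TransGen (ZArrow a b E) u w :=
    fun _ _ _ => Relation.TransGen.trans
  have hbase : ∀ Y ∈ E, ∃ S : Finset (ZMod n × ZMod n), Y = words a b S ∧ S.card = n ∧
      Adm (Relation.TransGen (ZArrow a b E)) S := by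
    intro Y hY
    obtain ⟨S, rfl, hc⟩ := (hE Y hY).exists_words hab
    exact ⟨S, rfl, hc, fun p hp q hq hpq => .single ⟨S, hY, p, hp, q, hq, hpq, rfl, rfl⟩⟩
  intro X hX rest hrest
  have key : ∃ S : Finset (ZMod n × ZMod n), compList a b n X rest = words a b S ∧ S.card = n ∧
      Adm (Relation.TransGen (ZArrow a b E)) S := by
    induction rest using List.reverseRecOn with
    | nil => exact hbase X hX
    | append_singleton rest p ih =>
      obtain ⟨r, Y⟩ := p
      obtain ⟨S, hS, hSc, hSa⟩ := ih (fun p hp => hrest p (List.mem_append_left _ hp))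
      obtain ⟨hr, hY⟩ := hrest (r, Y) (by simp)
      obtain ⟨T, rfl, hTc, hTa⟩ := hbase Y hY
      refine ⟨pcomp (r : ZMod n) S T, ?_, ?_, Adm.comp hR hSa hTa _⟩
      · rw [compList_concat, hS, comp_words hab hr]
      · have := Adm.card_comp hR h0 hSa hTa (by rw [hSc, ZMod.card]) (by rw [hTc, ZMod.card])
          (r : ZMod n)
        rwa [ZMod.card] at this
  obtain ⟨S, hS, hSc, hSa⟩ := key
  rw [hS]
  refine ⟨?_, by rw [ncard_words hab, hSc], Adm.isCode hab hR h0 hSa⟩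
  rintro w ⟨p, _, rfl⟩
  exact ⟨_, ZMod.val_lt _, _, ZMod.val_lt _, rfl⟩

/-- A path from `0` to `v` is realized by two distinct words of a single iterated composition. -/
lemma exists_words_of_path {a b : A} (hab : a ≠ b) {E : Set (Set (FreeMonoid A))}
    (hC : Compatible a b n E) {v : ZMod n}
    (h : Relation.TransGen (ZArrow a b E) (0 : ZMod n) v) :
    ∃ X ∈ E, ∃ rest : List (ℕ × Set (FreeMonoid A)), (∀ p ∈ rest, p.1 < n ∧ p.2 ∈ E) ∧
      ∃ Z : Finset (ZMod n × ZMod n), compList a b n X rest = words a b Z ∧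
        ∃ z ∈ Z, ∃ z' ∈ Z, z ≠ z' ∧ z.1 - z'.1 = 0 ∧ z'.2 - z.2 = v := by
  induction h with
  | single h =>
    obtain ⟨S, hS, p, hp, q, hq, hne, h1, h2⟩ := h
    exact ⟨_, hS, [], by simp, S, rfl, p, hp, q, hq, hne, h1.symm, h2.symm⟩
  | tail _ h ih =>
    obtain ⟨T, hT, p, hp, q, hq, _, h1, rfl⟩ := h
    obtain ⟨X, hX, rest, hrest, Z, hZ, z, hz, z', hz', hne, h3, h4⟩ := ih
    have hval : ∀ r : ZMod n, ∀ x ∈ rest ++ [(r.val, words a b T)], x.1 < n ∧ x.2 ∈ E := by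
      intro r x hx
      rcases List.mem_append.1 hx with hx | hx
      · exact hrest x hx
      · rw [List.mem_singleton.1 hx]
        exact ⟨ZMod.val_lt r, hT⟩
    have hcomp : ∀ r : ZMod n, compList a b n X (rest ++ [(r.val, words a b T)]) =
        words a b (pcomp r Z T) := by
      intro r
      rw [compList_concat, hZ, comp_words hab (ZMod.val_lt r), ZMod.natCast_zmod_val]
    have hZc : Z.card = Fintype.card (ZMod n) := by
      rw [← ncard_words hab, ← hZ, ZMod.card]
      exact (hC X hX rest hrest).2.1
    have hTc : T.card = Fintype.card (ZMod n) := by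
      rw [← ncard_words hab, ZMod.card]
      exact (hC _ hT [] (by simp)).2.1
    have hinj := glue_injOn_of_card hZc hTc (fun r => by
      rw [← ncard_words hab, ← hcomp, ZMod.card]
      exact (hC X hX _ (hval r)).2.1) (z.2 + p.1)
    have hg : (z, p) ∈ glue (z.2 + p.1) Z T := mem_glue.2 ⟨hz, hp, rfl⟩
    have hg' : (z', q) ∈ glue (z.2 + p.1) Z T :=
      mem_glue.2 ⟨hz', hq, by linear_combination h4 + h1⟩
    refine ⟨X, hX, _, hval (z.2 + p.1), _, hcomp _, _, Finset.mem_image_of_mem outer hg,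
      _, Finset.mem_image_of_mem outer hg', fun e => ?_, h3, rfl⟩
    exact hne (congrArg Prod.fst (hinj hg hg' e))

end Words

theorem statement1 (a b : A) (hab : a ≠ b) (n : ℕ) (hn : 1 ≤ n)
    (E : Set (Set (FreeMonoid A))) (hE : ∀ X ∈ E, IsCbc a b n X) :
    Compatible a b n E ↔
      ¬ ∃ (m : ℕ) (k : ℕ → ℕ), 1 ≤ m ∧ k 0 = 0 ∧ k m = 0 ∧
          ∀ s < m, Arrow a b n E (k s) (k (s + 1)) := by
  have : NeZero n := ⟨by omega⟩
  rw [path_iff_transGen hab hE]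
  refine ⟨fun hC h => ?_, compatible_of_acyclic hab hE⟩
  obtain ⟨_, _, _, _, _, _, z, _, z', _, hne, h1, h2⟩ := exists_words_of_path hab hC h
  exact hne (Prod.ext (sub_eq_zero.1 h1) (sub_eq_zero.1 h2).symm)

end CBC
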